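/- Let p be a prime dividing q+1 and L_p the poset of p-subgroups of G = PSU(3,q), q = 2^(2^n), ordered by inclusion, with Möbius function μ_{L_p}. Then ∑_H μ_{L_p}({1}, H) = (q⁶-2q⁵-q⁴+2q³-3q²)/3, where the sum ranges over all nontrivial p-subgroups H of G; equivalently, the Euler characteristic of the order complex of the poset of nontrivial p-subgroups of G equals -(q⁶-2q⁵-q⁴+2q³-3q²)/3. -/

import Mathlib

/-!
Write `q = qval n` and `U` for the group of unitary `3 × 3` matrices over `F_{q²}`. As `q` is an even
square, `q + 1` is prime to 6; so `p ≥ 5`, the centre of `SU(3,q)` is trivial (`center_SU3`), and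
`PSU(3,q)` is the group of elements of `U` of determinant 1 (`exists_embedding`).

A *frame* is a triple of pairwise orthogonal nonisotropic lines, encoded by its normalised bases
`u ∈ U`. Its torus, a conjugate of `torusP`, consists of the `p`-elements of determinant 1 which are
diagonal on the frame. A *homology* with nonisotropic centre `ℓ` is a `p`-element of determinant 1
which is scalar on `ℓ` and on the orthogonal complement of `ℓ` (a conjugate of `homol`). Then

* every `p`-subgroup lies in the torus of some frame (`HermField.exists_frame`), because the number
  of ordered frames is congruent to 6 modulo `p`;
* a `p`-subgroup which does not consist of homologies with one centre lies in the torus of a unique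
  unordered frame (`HermField.card_frames_conj`);
* a nontrivial group of homologies has a unique centre (`HermField.card_centres_conj`).

The Möbius function sums to `-1` over the nontrivial subgroups of any nontrivial `p`-subgroup. So
the homology groups contribute `-1` for each centre, and the other subgroups of the torus of a
frame contribute `-1 + 3 = 2` (`mobius_sum`). There are `q² (q² - q + 1)` centres and
`q³ (q - 1) (q² - q + 1) / 6` unordered frames; these numbers come from the order of `U`
(`HermField.card_unitary_top`), obtained by counting the unit vectors of nondegenerate subspaces
with the help of the norm map. The sum is therefore
`q³ (q - 1) (q² - q + 1) / 3 - q² (q² - q + 1)`.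
-/

open scoped Classical Pointwise

namespace PSUPaper

/-- `q = 2^(2^n)`. -/
abbrev qval (n : ℕ) : ℕ := 2 ^ 2 ^ n

/-- The field with `q² = 2^(2^(n+1))` elements. -/
abbrev Fq2 (n : ℕ) : Type := GaloisField 2 (2 ^ (n + 1))

/-- The involutory automorphism `x ↦ x^q` of `F_{q²}`, as a star-ring structure. -/
noncomputable instance starRingFq2 (n : ℕ) : StarRing (Fq2 n) where
  star x := x ^ qval n
  star_involutive x := by
    letI : Fintype (Fq2 n) := Fintype.ofFinite _
    show (x ^ qval n) ^ qval n = x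
    rw [← pow_mul]
    have h : qval n * qval n = 2 ^ 2 ^ (n + 1) := by
      rw [← pow_add, ← two_mul, pow_succ, mul_comm]
    have hcard : Fintype.card (Fq2 n) = 2 ^ 2 ^ (n + 1) := by
      rw [← Nat.card_eq_fintype_card, GaloisField.card 2 (2 ^ (n + 1)) (by positivity)]
    rw [h, ← hcard]
    exact FiniteField.pow_card x
  star_mul x y := by
    show (x * y) ^ qval n = y ^ qval n * x ^ qval n
    rw [mul_pow, mul_comm]
  star_add x y := by
    show (x + y) ^ qval n = x ^ qval n + y ^ qval n
    exact add_pow_char_pow x y 2 (2 ^ n)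

/-- `SU(3,q)`: the subgroup of the unitary group `{M | M * (M^σ)ᵀ = 1}` (with respect to the
star structure `σ : x ↦ x^q` on `F_{q²}`) consisting of the matrices of determinant 1. -/
noncomputable def SU3 (n : ℕ) : Subgroup (Matrix.unitaryGroup (Fin 3) (Fq2 n)) where
  carrier := {M | (M : Matrix (Fin 3) (Fin 3) (Fq2 n)).det = 1}
  one_mem' := by simp
  mul_mem' := by
    intro a b ha hb
    simp only [Set.mem_setOf_eq, Matrix.UnitaryGroup.mul_val, Matrix.det_mul] at *
    rw [ha, hb, mul_one]
  inv_mem' := by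
    intro a ha
    simp only [Set.mem_setOf_eq, Matrix.UnitaryGroup.inv_val] at *
    rw [Matrix.star_eq_conjTranspose, Matrix.det_conjTranspose, ha, star_one]

/-- `PSU(3,q)`: the quotient of `SU(3,q)` by its center. -/
noncomputable abbrev PSU3 (n : ℕ) : Type := SU3 n ⧸ Subgroup.center (SU3 n)

/-- `mu` is the Möbius function `H ↦ μ(H, G)` of the subgroup lattice of `G`:
`μ(G,G) = 1` and `∑_{J : H ≤ J ≤ G} μ(J,G) = 0` for `H < G`. -/
def IsSubgroupMobius {G : Type*} [Group G] (mu : Subgroup G → ℤ) : Prop :=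
  ∀ H : Subgroup G, (∑ᶠ K ∈ {K : Subgroup G | H ≤ K}, mu K) = if H = ⊤ then 1 else 0

/-- `H` and `K` are conjugate subgroups. -/
def IsConjSub {G : Type*} [Group G] (H K : Subgroup G) : Prop :=
  ∃ g : G, Subgroup.map (MulAut.conj g).toMonoidHom H = K

/-- The conjugacy classes of subgroups of `G`. -/
abbrev SubClasses (G : Type*) [Group G] : Type _ :=
  Quotient (MulAction.orbitRel (ConjAct G) (Subgroup G))

/-- The conjugacy class of a subgroup. -/
def clsOf {G : Type*} [Group G] (H : Subgroup G) : SubClasses G :=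
  Quotient.mk (MulAction.orbitRel (ConjAct G) (Subgroup G)) H

/-- The order on conjugacy classes of subgroups: `[H] ≤ [K]` iff `H` is contained in some
conjugate of `K`. -/
def clsLe {G : Type*} [Group G] (x y : SubClasses G) : Prop :=
  ∃ H K : Subgroup G, clsOf H = x ∧ clsOf K = y ∧ ∃ g : ConjAct G, H ≤ g • K

/-- `lam` is the Möbius function `[H] ↦ μ([H], [G])` of the poset of conjugacy classes of
subgroups of `G`: `μ([G],[G]) = 1` and `∑_{[J] : [H] ≤ [J] ≤ [G]} μ([J],[G]) = 0` for
`[H] < [G]`. -/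
def IsClassMobius {G : Type*} [Group G] (lam : SubClasses G → ℤ) : Prop :=
  ∀ x : SubClasses G, (∑ᶠ y ∈ {y : SubClasses G | clsLe x y}, lam y) =
    if x = clsOf (⊤ : Subgroup G) then 1 else 0

/-- `m` is the Möbius function `H ↦ μ_{L_p}({1}, H)` of the poset `L_p` of `p`-subgroups of `G`:
`μ_{L_p}({1},{1}) = 1` and `∑_{J ∈ L_p : J ≤ K} μ_{L_p}({1},J) = 0` for `{1} < K ∈ L_p`. -/
def IsPMobiusBot {G : Type*} [Group G] (p : ℕ) (m : Subgroup G → ℤ) : Prop :=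
  m ⊥ = 1 ∧ ∀ K : Subgroup G, IsPGroup p K → ⊥ < K →
    (∑ᶠ J ∈ {J : Subgroup G | IsPGroup p J ∧ J ≤ K}, m J) = 0

/-! ### The norm map and counting unit vectors -/

/-- `K` is a finite field of characteristic 2 with `q²` elements whose star operation is the involutory
automorphism `x ↦ x ^ q`. -/
structure HermField (K : Type*) [Field K] [StarRing K] (q : ℕ) : Prop where
  two_le : 2 ≤ q
  two_eq : (2 : K) = 0
  card : Nat.card K = q ^ 2
  star_eq : ∀ x : K, star x = x ^ q

section Herm

variable {K : Type*} [Field K] [StarRing K] {q : ℕ}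

theorem HermField.finite (hK : HermField K q) : Finite K := by
  have := hK.two_le
  exact Nat.finite_of_card_ne_zero (by rw [hK.card]; positivity)

theorem HermField.card_units (hK : HermField K q) : Nat.card Kˣ = (q + 1) * (q - 1) := by
  have := hK.finite
  have h2 := hK.two_le
  rw [Nat.card_units, hK.card]
  obtain ⟨r, rfl⟩ := Nat.exists_eq_add_of_le h2
  have : (2 + r) ^ 2 = (2 + r + 1) * (2 + r - 1) + 1 := by
    have : 2 + r - 1 = 1 + r := by omega
    rw [this]; ring
  omega

/-- The norm `t ↦ t * star t` maps onto the nonzero elements of the fixed field, with all fibres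
of size `q + 1`: in the cyclic group `Kˣ`, the image of the `(q+1)`-st power map is the kernel of
the `(q-1)`-st power map, since both have `q - 1` elements. -/
theorem HermField.card_norm_fiber (hK : HermField K q) {c : K} (hc : c ≠ 0) (hs : star c = c) :
    Nat.card {t : K // t * star t = c} = q + 1 := by
  have := hK.finite
  have h2 := hK.two_le
  have hcard := hK.card_units
  have hle : (powMonoidHom (q + 1) : Kˣ →* Kˣ).range ≤ (powMonoidHom (q - 1) : Kˣ →* Kˣ).ker := by
    rintro _ ⟨x, rfl⟩
    rw [MonoidHom.mem_ker]
    simp only [powMonoidHom_apply]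
    rw [← pow_mul, ← hcard]
    exact pow_card_eq_one'
  have heq := Subgroup.eq_of_le_of_card_ge hle (by
    rw [IsCyclic.card_powMonoidHom_ker, IsCyclic.card_powMonoidHom_range, hcard,
      Nat.gcd_mul_left_left, Nat.gcd_mul_right_left, Nat.mul_div_cancel_left _ (by omega)])
  have hmem : Units.mk0 c hc ∈ (powMonoidHom (q - 1) : Kˣ →* Kˣ).ker := by
    rw [MonoidHom.mem_ker]
    ext
    simp only [powMonoidHom_apply, Units.val_pow_eq_pow_val, Units.val_mk0, Units.val_one]
    rw [hK.star_eq] at hs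
    have : c ^ (q - 1) * c = 1 * c := by
      rw [← pow_succ, Nat.sub_add_cancel (by omega), hs, one_mul]
    exact mul_right_cancel₀ hc this
  rw [← heq] at hmem
  obtain ⟨x, hx⟩ := hmem
  have hx' : (x : K) ^ (q + 1) = c := by
    have := congrArg (Units.val) hx
    simpa using this
  have hker : Nat.card (powMonoidHom (q + 1) : Kˣ →* Kˣ).ker = q + 1 := by
    rw [IsCyclic.card_powMonoidHom_ker, hcard, Nat.gcd_mul_right_left]
  rw [← hker]
  refine (Nat.card_congr (Equiv.ofBijective
    (fun u : (powMonoidHom (q + 1) : Kˣ →* Kˣ).ker =>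
      (⟨x * (u : Kˣ), ?_⟩ : {t : K // t * star t = c})) ⟨?_, ?_⟩)).symm
  · have h1 := u.2
    rw [MonoidHom.mem_ker] at h1
    have h1' := congrArg Units.val h1
    simp only [powMonoidHom_apply, Units.val_pow_eq_pow_val, Units.val_one] at h1'
    rw [hK.star_eq, ← pow_succ', mul_pow, hx', h1', mul_one]
  · intro u v huv
    have : (x : K) * (u : Kˣ) = x * (v : Kˣ) := congrArg Subtype.val huv
    have := mul_left_cancel₀ x.ne_zero this
    exact Subtype.ext (Units.ext this)
  · rintro ⟨t, ht⟩
    have ht0 : t ≠ 0 := by rintro rfl; simp at ht; exact hc ht.symm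
    rw [hK.star_eq, ← pow_succ'] at ht
    refine ⟨⟨x⁻¹ * Units.mk0 t ht0, ?_⟩, ?_⟩
    · rw [MonoidHom.mem_ker]
      ext
      simp [mul_pow, hx', ht, hc]
    · simp

theorem HermField.card_norm_zero (c : K) (hc : c = 0) :
    Nat.card {t : K // t * star t = c} = 1 := by
  subst hc
  have : Unique {t : K // t * star t = 0} :=
    { default := ⟨0, by simp⟩
      uniq := fun ⟨t, ht⟩ => by
        rw [mul_eq_zero, star_eq_zero, or_self] at ht
        exact Subtype.ext ht }
  exact Nat.card_unique

/-- The standard Hermitian form on `K³`, linear in the first variable. -/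
def herm (x y : Fin 3 → K) : K := ∑ i, x i * star (y i)

theorem herm_add_left (x y z : Fin 3 → K) : herm (x + y) z = herm x z + herm y z := by
  simp [herm, add_mul, Finset.sum_add_distrib]

theorem herm_smul_left (a : K) (x y : Fin 3 → K) : herm (a • x) y = a * herm x y := by
  simp [herm, mul_assoc, Finset.mul_sum]

theorem herm_star (x y : Fin 3 → K) : star (herm x y) = herm y x := by
  simp [herm, mul_comm]

theorem herm_add_right (x y z : Fin 3 → K) : herm z (x + y) = herm z x + herm z y := by
  simp [herm, mul_add, Finset.sum_add_distrib]

theorem herm_smul_right (a : K) (x y : Fin 3 → K) : herm x (a • y) = star a * herm x y := by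
  simp only [herm, Pi.smul_apply, smul_eq_mul, star_mul, Finset.mul_sum]
  exact Finset.sum_congr rfl fun i _ => by ring

/-- The orthogonal complement of `v` inside `V`. -/
def orthIn (V : Submodule K (Fin 3 → K)) (v : Fin 3 → K) : Submodule K (Fin 3 → K) where
  carrier := {x | x ∈ V ∧ herm x v = 0}
  add_mem' := fun ha hb => ⟨V.add_mem ha.1 hb.1, by rw [herm_add_left, ha.2, hb.2, add_zero]⟩
  zero_mem' := ⟨V.zero_mem, by simp [herm]⟩
  smul_mem' := fun c x hx => ⟨V.smul_mem c hx.1, by rw [herm_smul_left, hx.2, mul_zero]⟩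

theorem mem_orthIn {V : Submodule K (Fin 3 → K)} {v x : Fin 3 → K} :
    x ∈ orthIn V v ↔ x ∈ V ∧ herm x v = 0 := Iff.rfl

/-- The number of unit vectors in `V`. -/
noncomputable def unitCount (V : Submodule K (Fin 3 → K)) : ℕ :=
  Nat.card {x : V // herm (x : Fin 3 → K) x = 1}

/-- The orthogonal decomposition `V = (V ∩ v^⊥) ⊕ K v` for a unit vector `v ∈ V`. -/
def orthEquiv (V : Submodule K (Fin 3 → K)) (v : Fin 3 → K) (hv : v ∈ V) (h1 : herm v v = 1) :
    orthIn V v × K ≃ V where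
  toFun p := ⟨p.1 + p.2 • v, V.add_mem p.1.2.1 (V.smul_mem _ hv)⟩
  invFun x := (⟨x - herm (x : Fin 3 → K) v • v, V.sub_mem x.2 (V.smul_mem _ hv), by
    rw [sub_eq_add_neg, ← neg_smul, herm_add_left, herm_smul_left, h1]; ring⟩, herm (x : Fin 3 → K) v)
  left_inv := by
    rintro ⟨⟨x, hx, hx0⟩, t⟩
    have : herm (x + t • v) v = t := by rw [herm_add_left, herm_smul_left, h1, hx0]; ring
    ext <;> simp [this]
  right_inv := by
    rintro ⟨x, hx⟩
    ext; simp

theorem card_orthIn (hK : HermField K q) {V : Submodule K (Fin 3 → K)} {v : Fin 3 → K}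
    (hv : v ∈ V) (h1 : herm v v = 1) : Nat.card V = q ^ 2 * Nat.card (orthIn V v) := by
  rw [← Nat.card_congr (orthEquiv V v hv h1), Nat.card_prod, hK.card, mul_comm]

/-- Splitting off a unit vector: `y + t v` is a unit vector for exactly one `t` if `y` is a unit
vector, and for exactly `q + 1` values of `t` otherwise. -/
theorem unitCount_orthIn (hK : HermField K q) {V : Submodule K (Fin 3 → K)} {v : Fin 3 → K}
    (hv : v ∈ V) (h1 : herm v v = 1) :
    unitCount V + q * unitCount (orthIn V v) = (q + 1) * Nat.card (orthIn V v) := by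
  have := hK.finite
  let _ := Fintype.ofFinite (orthIn V v)
  have e : {x : V // herm (x : Fin 3 → K) x = 1} ≃
      Σ y : orthIn V v, {t : K // t * star t = 1 - herm (y : Fin 3 → K) y} :=
    ((orthEquiv V v hv h1).subtypeEquiv (q := fun x : V => herm (x : Fin 3 → K) x = 1)
      (p := fun p => p.2 * star p.2 = 1 - herm (p.1 : Fin 3 → K) p.1) (by
        rintro ⟨⟨x, hx, hx0⟩, t⟩
        have hx1 : herm v x = 0 := by rw [← herm_star, hx0, star_zero]
        simp only [orthEquiv, Equiv.coe_fn_mk, herm_add_left, herm_add_right, herm_smul_left,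
          herm_smul_right, h1, hx0, hx1]
        constructor
        · intro h; linear_combination h
        · intro h; linear_combination h)).symm.trans
      ⟨fun p => ⟨p.1.1, p.1.2, p.2⟩, fun s => ⟨(s.1, s.2.1), s.2.2⟩, fun _ => rfl, fun _ => rfl⟩
  have hN : unitCount V = ∑ y : orthIn V v, if herm (y : Fin 3 → K) y = 1 then 1 else q + 1 := by
    rw [unitCount, Nat.card_congr e, Nat.card_sigma]
    refine Finset.sum_congr rfl fun y _ => ?_
    split_ifs with h
    · exact HermField.card_norm_zero _ (by rw [h, sub_self])
    · exact hK.card_norm_fiber (fun h' => h (sub_eq_zero.1 h').symm) (by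
        rw [star_sub, star_one, herm_star])
  have hN' : unitCount (orthIn V v) =
      ∑ y : orthIn V v, if herm (y : Fin 3 → K) y = 1 then 1 else 0 := by
    rw [unitCount, Nat.card_eq_fintype_card, Fintype.card_subtype, Finset.card_filter]
  rw [hN, hN', Finset.mul_sum, ← Finset.sum_add_distrib, Nat.card_eq_fintype_card,
    Fintype.card, Finset.card_eq_sum_ones, Finset.mul_sum]
  refine Finset.sum_congr rfl fun y _ => ?_
  split_ifs <;> ring

end Herm

section Counting

variable {K : Type*} [Field K] [StarRing K] {q : ℕ}

theorem HermField.card_top (hK : HermField K q) :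
    Nat.card (⊤ : Submodule K (Fin 3 → K)) = q ^ 6 := by
  have := hK.finite
  rw [Nat.card_congr Submodule.topEquiv.toEquiv, Nat.card_fun, hK.card, Nat.card_eq_fintype_card,
    Fintype.card_fin]
  ring

theorem herm_single (i j : Fin 3) :
    herm (Pi.single i (1 : K)) (Pi.single j 1) = if i = j then 1 else 0 := by
  simp only [herm, Pi.single_apply, Fin.sum_univ_three]
  fin_cases i <;> fin_cases j <;> simp

theorem HermField.unitCount_top (hK : HermField K q) :
    (unitCount (⊤ : Submodule K (Fin 3 → K)) : ℤ) = (q + 1) * (q ^ 4 - q ^ 3 + q ^ 2) := by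
  have := hK.finite
  have h2 := hK.two_le
  set e : Fin 3 → Fin 3 → K := fun i => Pi.single i 1
  have h0 : e 0 ∈ (⊤ : Submodule K (Fin 3 → K)) := trivial
  have h1 : e 1 ∈ orthIn (⊤ : Submodule K (Fin 3 → K)) (e 0) := ⟨trivial, by simp [e, herm_single]⟩
  have h2' : e 2 ∈ orthIn (orthIn (⊤ : Submodule K (Fin 3 → K)) (e 0)) (e 1) :=
    ⟨⟨trivial, by simp [e, herm_single]⟩, by simp [e, herm_single]⟩
  have n (i : Fin 3) : herm (e i) (e i) = 1 := by simp [e, herm_single]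
  have c0 := card_orthIn hK h0 (n 0)
  have c1 := card_orthIn hK h1 (n 1)
  have c2 := card_orthIn hK h2' (n 2)
  have u0 := unitCount_orthIn hK h0 (n 0)
  have u1 := unitCount_orthIn hK h1 (n 1)
  have u2 := unitCount_orthIn hK h2' (n 2)
  rw [hK.card_top, c1, c2] at c0
  have hq : 0 < q ^ 6 := by positivity
  have c3 : Nat.card (orthIn (orthIn (orthIn (⊤ : Submodule K (Fin 3 → K)) (e 0)) (e 1)) (e 2)) = 1 := by
    refine Nat.eq_of_mul_eq_mul_left hq ?_
    rw [mul_one]; nth_rw 2 [c0]; ring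
  have u3 : unitCount (orthIn (orthIn (orthIn (⊤ : Submodule K (Fin 3 → K)) (e 0)) (e 1)) (e 2)) = 0 := by
    have := (Nat.card_eq_one_iff_unique.1 c3).1
    rw [unitCount]
    have : IsEmpty {x : orthIn (orthIn (orthIn (⊤ : Submodule K (Fin 3 → K)) (e 0)) (e 1)) (e 2) //
        herm (x : Fin 3 → K) x = 1} := by
      refine ⟨fun ⟨x, hx⟩ => ?_⟩
      rw [Subsingleton.elim x 0] at hx
      simp [herm] at hx
    exact Nat.card_of_isEmpty
  rw [u3, c3] at u2
  rw [c2, c3] at u1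
  rw [c1, c2, c3] at u0
  zify at u0 u1 u2
  linear_combination u0 - (q : ℤ) * u1 + (q : ℤ) ^ 2 * u2

variable {v w : Fin 3 → K}

theorem HermField.unitCount_orth_one (hK : HermField K q) (hv : herm v v = 1) :
    (unitCount (orthIn ⊤ v) : ℤ) = (q + 1) * (q ^ 2 - q) := by
  have h2 := hK.two_le
  have c0 := card_orthIn hK (V := ⊤) trivial hv
  have u0 := unitCount_orthIn hK (V := ⊤) trivial hv
  have t := hK.unitCount_top
  rw [hK.card_top] at c0
  zify at u0 c0
  have hq : (q : ℤ) ≠ 0 := by positivity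
  have c0' : (Nat.card (orthIn ⊤ v) : ℤ) = q ^ 4 := by
    have : (q : ℤ) ^ 2 * q ^ 4 = q ^ 2 * (Nat.card (orthIn ⊤ v) : ℤ) := by rw [← c0]; ring
    exact (mul_left_cancel₀ (pow_ne_zero 2 hq) this).symm
  rw [c0', t] at u0
  exact mul_left_cancel₀ hq (by linear_combination u0)

theorem HermField.unitCount_orth_two (hK : HermField K q) (hv : herm v v = 1) (hw : herm w w = 1)
    (hwv : herm w v = 0) :
    (unitCount (orthIn (orthIn ⊤ v) w) : ℤ) = q + 1 := by
  have h2 := hK.two_le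
  have c0 := card_orthIn hK (V := ⊤) trivial hv
  have hm : w ∈ orthIn ⊤ v := ⟨trivial, hwv⟩
  have c1 := card_orthIn hK hm hw
  have u1 := unitCount_orthIn hK hm hw
  have t := hK.unitCount_orth_one hv
  rw [hK.card_top, c1] at c0
  zify at u1 c0
  have hq : (q : ℤ) ≠ 0 := by positivity
  have c0' : (Nat.card (orthIn (orthIn ⊤ v) w) : ℤ) = q ^ 2 := by
    have : (q : ℤ) ^ 4 * q ^ 2 = q ^ 4 * (Nat.card (orthIn (orthIn ⊤ v) w) : ℤ) := by
      rw [show (q : ℤ) ^ 4 * q ^ 2 = q ^ 6 by ring, c0]; ring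
    exact (mul_left_cancel₀ (pow_ne_zero 4 hq) this).symm
  rw [c0', t] at u1
  exact mul_left_cancel₀ hq (by linear_combination u1)

theorem mem_unitary_iff_herm {M : Matrix (Fin 3) (Fin 3) K} :
    M ∈ Matrix.unitaryGroup (Fin 3) K ↔ ∀ i j, herm (M i) (M j) = if i = j then 1 else 0 := by
  rw [Matrix.mem_unitaryGroup_iff, ← Matrix.ext_iff]
  simp [Matrix.mul_apply, herm, Matrix.star_apply, Matrix.one_apply]

theorem herm_symm_zero {x y : Fin 3 → K} (h : herm x y = 0) : herm y x = 0 := by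
  rw [← herm_star, h, star_zero]

theorem mem_unitary_of_rows {v w x : Fin 3 → K} (hv : herm v v = 1) (hw : herm w w = 1)
    (hx : herm x x = 1) (hwv : herm w v = 0) (hxv : herm x v = 0) (hxw : herm x w = 0) :
    Matrix.of ![v, w, x] ∈ Matrix.unitaryGroup (Fin 3) K := by
  have h1 := herm_symm_zero hwv
  have h2 := herm_symm_zero hxv
  have h3 := herm_symm_zero hxw
  rw [mem_unitary_iff_herm]
  intro i j
  fin_cases i <;> fin_cases j <;> simpa

/-- A unitary matrix is the same as an orthonormal basis, built row by row. -/
def unitaryEquiv (X : (Fin 3 → K) → Prop) :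
    {u : Matrix.unitaryGroup (Fin 3) K // X (u.1 0)} ≃
      Σ v : {v : Fin 3 → K // herm v v = 1 ∧ X v},
        Σ w : {w : orthIn ⊤ v.1 // herm (w : Fin 3 → K) w = 1},
          {x : orthIn (orthIn ⊤ v.1) (w.1 : Fin 3 → K) // herm (x : Fin 3 → K) x = 1} where
  toFun u := ⟨⟨u.1.1 0, by simpa using mem_unitary_iff_herm.1 u.1.2 0 0, u.2⟩,
    ⟨⟨u.1.1 1, trivial, by simpa using mem_unitary_iff_herm.1 u.1.2 1 0⟩,
      by simpa using mem_unitary_iff_herm.1 u.1.2 1 1⟩,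
    ⟨⟨u.1.1 2, ⟨trivial, by simpa using mem_unitary_iff_herm.1 u.1.2 2 0⟩,
      by simpa using mem_unitary_iff_herm.1 u.1.2 2 1⟩,
      by simpa using mem_unitary_iff_herm.1 u.1.2 2 2⟩⟩
  invFun s := ⟨⟨Matrix.of ![s.1.1, s.2.1.1.1, s.2.2.1.1],
    mem_unitary_of_rows s.1.2.1 s.2.1.2 s.2.2.2 s.2.1.1.2.2 s.2.2.1.2.1.2 s.2.2.1.2.2⟩, s.1.2.2⟩
  left_inv := by
    rintro ⟨⟨u, hu⟩, hX⟩
    apply Subtype.ext; apply Subtype.ext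
    ext i j
    fin_cases i <;> rfl
  right_inv := fun _ => rfl

theorem HermField.card_unitary (hK : HermField K q) (X : (Fin 3 → K) → Prop) :
    (Nat.card {u : Matrix.unitaryGroup (Fin 3) K // X (u.1 0)} : ℤ) =
      Nat.card {v : Fin 3 → K // herm v v = 1 ∧ X v} * ((q + 1) * (q ^ 2 - q) * (q + 1)) := by
  have := hK.finite
  let _ := Fintype.ofFinite {v : Fin 3 → K // herm v v = 1 ∧ X v}
  rw [Nat.card_congr (unitaryEquiv X), Nat.card_sigma, Nat.card_eq_fintype_card, Fintype.card,
    Finset.card_eq_sum_ones]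
  push_cast
  rw [Finset.sum_mul]
  refine Finset.sum_congr rfl fun v _ => ?_
  let _ := Fintype.ofFinite {w : orthIn ⊤ v.1 // herm (w : Fin 3 → K) w = 1}
  rw [Nat.card_sigma, one_mul, ← hK.unitCount_orth_one v.2.1, unitCount, Nat.card_eq_fintype_card,
    Fintype.card, Finset.card_eq_sum_ones]
  push_cast
  rw [Finset.sum_mul]
  refine Finset.sum_congr rfl fun w _ => ?_
  rw [one_mul, ← hK.unitCount_orth_two v.2.1 w.2 w.1.2.2, unitCount]

/-- `|U(3,q)| = q³ (q+1)³ (q-1) (q²-q+1)`. -/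
theorem HermField.card_unitary_top (hK : HermField K q) :
    (Nat.card (Matrix.unitaryGroup (Fin 3) K) : ℤ) =
      (q + 1) ^ 3 * (q ^ 3 * (q - 1) * (q ^ 2 - q + 1)) := by
  have h := hK.card_unitary (fun _ => True)
  have e : Nat.card {v : Fin 3 → K // herm v v = 1 ∧ True} =
      unitCount (⊤ : Submodule K (Fin 3 → K)) :=
    Nat.card_congr ⟨fun v => ⟨⟨v.1, trivial⟩, v.2.1⟩, fun v => ⟨v.1.1, v.2, trivial⟩,
      fun _ => rfl, fun _ => rfl⟩
  rw [Nat.card_congr (Equiv.subtypeUnivEquiv fun _ => trivial), e, hK.unitCount_top] at h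
  rw [h]; ring

/-- The number of unitary matrices whose first row is supported in the first coordinate. -/
theorem HermField.card_unitary_stab (hK : HermField K q) :
    (Nat.card {u : Matrix.unitaryGroup (Fin 3) K // u.1 0 1 = 0 ∧ u.1 0 2 = 0} : ℤ) =
      (q + 1) ^ 3 * (q ^ 2 - q) := by
  have h := hK.card_unitary (fun v => v 1 = 0 ∧ v 2 = 0)
  have e : Nat.card {v : Fin 3 → K // herm v v = 1 ∧ v 1 = 0 ∧ v 2 = 0} =
      Nat.card {t : K // t * star t = 1} :=
    Nat.card_congr ⟨fun v => ⟨v.1 0, by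
        have := v.2.1
        simpa [herm, Fin.sum_univ_three, v.2.2.1, v.2.2.2] using this⟩,
      fun t => ⟨![t.1, 0, 0], by simpa [herm, Fin.sum_univ_three] using t.2⟩,
      fun v => by
        apply Subtype.ext; ext i
        have := v.2.2
        fin_cases i <;> simp [this.1, this.2], fun _ => rfl⟩
  rw [e, hK.card_norm_fiber one_ne_zero (star_one K)] at h
  rw [h]; push_cast; ring

end Counting

/-! ### Diagonal subgroups of the unitary group -/

section Diag

variable {K : Type*} [Field K] [StarRing K] {q p : ℕ}

local notation "U" => Matrix.unitaryGroup (Fin 3)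

theorem unitary_mul_apply (u v : U K) (i j : Fin 3) :
    (u * v).1 i j = ∑ k, u.1 i k * v.1 k j := rfl

theorem unitary_inv_apply (u : U K) (i j : Fin 3) : (u⁻¹).1 i j = star (u.1 j i) := rfl

theorem unitary_one_apply (i j : Fin 3) : (1 : U K).1 i j = if i = j then 1 else 0 := rfl

theorem unitary_row_ne (u : U K) (i : Fin 3) : ∃ k, u.1 i k ≠ 0 := by
  by_contra! h
  have := mem_unitary_iff_herm.1 u.2 i i
  simp [herm, h] at this

theorem unitary_col_ne (u : U K) (k : Fin 3) : ∃ i, u.1 i k ≠ 0 := by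
  obtain ⟨i, hi⟩ := unitary_row_ne u⁻¹ k
  rw [unitary_inv_apply] at hi
  exact ⟨i, fun h => hi (by rw [h, star_zero])⟩

/-- The diagonal unitary matrices: the stabiliser of the ordered frame of coordinate lines. -/
def diagU (K : Type*) [Field K] [StarRing K] : Subgroup (U K) where
  carrier := {u | ∀ i j, i ≠ j → u.1 i j = 0}
  one_mem' := fun i j h => by rw [unitary_one_apply, if_neg h]
  mul_mem' := by
    intro a b ha hb i j h
    rw [unitary_mul_apply]
    refine Finset.sum_eq_zero fun k _ => ?_
    by_cases hk : i = k
    · subst hk; rw [hb _ _ h, mul_zero]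
    · rw [ha _ _ hk, zero_mul]
  inv_mem' := by
    intro a ha i j h
    rw [unitary_inv_apply, ha _ _ h.symm, star_zero]

theorem mem_diagU {u : U K} : u ∈ diagU K ↔ ∀ i j, i ≠ j → u.1 i j = 0 := Iff.rfl

theorem diagU_mul_left {d : U K} (hd : d ∈ diagU K) (u : U K) (i j : Fin 3) :
    (d * u).1 i j = d.1 i i * u.1 i j := by
  rw [unitary_mul_apply, Finset.sum_eq_single i (fun k _ hk => by rw [hd _ _ hk.symm, zero_mul])
    (by simp)]

theorem diagU_mul_right {d : U K} (hd : d ∈ diagU K) (u : U K) (i j : Fin 3) :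
    (u * d).1 i j = u.1 i j * d.1 j j := by
  rw [unitary_mul_apply, Finset.sum_eq_single j (fun k _ hk => by rw [hd _ _ hk, mul_zero])
    (by simp)]

theorem diagU_ext {d e : U K} (hd : d ∈ diagU K) (he : e ∈ diagU K)
    (h : ∀ i, d.1 i i = e.1 i i) : d = e := by
  apply Matrix.UnitaryGroup.ext
  intro i j
  by_cases hij : i = j
  · subst hij; exact h i
  · exact (hd i j hij).trans (he i j hij).symm

theorem diagU_comm {d e : U K} (hd : d ∈ diagU K) (he : e ∈ diagU K) : d * e = e * d :=
  diagU_ext (mul_mem hd he) (mul_mem he hd) fun i => by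
    rw [diagU_mul_left hd, diagU_mul_left he, mul_comm]

theorem diagU_ne {d : U K} (hd : d ∈ diagU K) (i : Fin 3) : d.1 i i ≠ 0 := by
  obtain ⟨k, hk⟩ := unitary_row_ne d i
  by_cases h : i = k
  · subst h; exact hk
  · exact absurd (hd i k h) hk

theorem diagU_norm {d : U K} (hd : d ∈ diagU K) (i : Fin 3) : d.1 i i * star (d.1 i i) = 1 := by
  have h := mem_unitary_iff_herm.1 d.2 i i
  rw [if_pos rfl, herm, Finset.sum_eq_single i
    (fun k _ hk => by rw [hd _ _ hk.symm, zero_mul]) (by simp)] at h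
  exact h

theorem diagU_det {d : U K} (hd : d ∈ diagU K) :
    d.1.det = d.1 0 0 * d.1 1 1 * d.1 2 2 := by
  rw [Matrix.det_fin_three, hd 0 1 (by decide), hd 0 2 (by decide), hd 1 2 (by decide)]
  ring

theorem diagU_pow {d : U K} (hd : d ∈ diagU K) (k : ℕ) (i : Fin 3) :
    (d ^ k).1 i i = d.1 i i ^ k := by
  induction k with
  | zero => simp
  | succ k ih => rw [pow_succ, diagU_mul_right hd, ih, pow_succ]

/-- The diagonal unitary matrix with given diagonal entries of norm `1`. -/
def mkDiag (a : Fin 3 → K) (ha : ∀ i, a i * star (a i) = 1) : U K :=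
  ⟨Matrix.diagonal a, by
    rw [mem_unitary_iff_herm]
    intro i j
    rw [herm]
    by_cases hij : i = j
    · subst hij
      rw [if_pos rfl, Finset.sum_eq_single i
        (fun k _ hk => by rw [Matrix.diagonal_apply_ne _ hk.symm, zero_mul]) (by simp)]
      simpa using ha i
    · rw [if_neg hij, Finset.sum_eq_zero]
      intro k _
      by_cases hk : i = k
      · subst hk; rw [Matrix.diagonal_apply_ne _ (Ne.symm hij), star_zero, mul_zero]
      · rw [Matrix.diagonal_apply_ne _ hk, zero_mul]⟩

theorem mkDiag_mem (a : Fin 3 → K) (ha : ∀ i, a i * star (a i) = 1) : mkDiag a ha ∈ diagU K :=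
  fun _ _ h => Matrix.diagonal_apply_ne _ h

theorem mkDiag_apply (a : Fin 3 → K) (ha : ∀ i, a i * star (a i) = 1) (i : Fin 3) :
    (mkDiag a ha).1 i i = a i := Matrix.diagonal_apply_eq _ _

theorem HermField.card_diagU (hK : HermField K q) : Nat.card (diagU K) = (q + 1) ^ 3 := by
  have e : diagU K ≃ (Fin 3 → {t : K // t * star t = 1}) :=
    { toFun := fun d i => ⟨d.1.1 i i, diagU_norm d.2 i⟩
      invFun := fun a => ⟨mkDiag (fun i => a i) fun i => (a i).2, mkDiag_mem _ _⟩
      left_inv := fun d => Subtype.ext (diagU_ext (mkDiag_mem _ fun i => diagU_norm d.2 i) d.2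
        fun i => mkDiag_apply _ (fun i => diagU_norm d.2 i) i)
      right_inv := fun a => funext fun i =>
        Subtype.ext (mkDiag_apply (fun i => (a i : K)) (fun i => (a i).2) i) }
  rw [Nat.card_congr e, Nat.card_fun, hK.card_norm_fiber one_ne_zero (star_one K),
    Nat.card_eq_fintype_card, Fintype.card_fin]

/-- The `p`-part of the diagonal torus of `SU(3,q)`. -/
def torusP (K : Type*) [Field K] [StarRing K] (p : ℕ) : Subgroup (U K) where
  carrier := {d | d ∈ diagU K ∧ d.1.det = 1 ∧ ∃ k : ℕ, d ^ p ^ k = 1}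
  one_mem' := ⟨one_mem _, by simp, 0, one_pow _⟩
  mul_mem' := by
    rintro a b ⟨ha, ha', k, hk⟩ ⟨hb, hb', l, hl⟩
    refine ⟨mul_mem ha hb, ?_, k + l, ?_⟩
    · rw [Matrix.UnitaryGroup.mul_val, Matrix.det_mul, ha', hb', one_mul]
    · rw [(show Commute a b from diagU_comm ha hb).mul_pow, pow_add, pow_mul, hk, one_pow,
        mul_comm (p ^ k), pow_mul, hl, one_pow, one_mul]
  inv_mem' := by
    rintro a ⟨ha, ha', k, hk⟩
    refine ⟨inv_mem ha, ?_, k, by rw [inv_pow, hk, inv_one]⟩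
    rw [Matrix.UnitaryGroup.inv_val, Matrix.star_eq_conjTranspose, Matrix.det_conjTranspose, ha',
      star_one]

theorem mem_torusP {d : U K} :
    d ∈ torusP K p ↔ d ∈ diagU K ∧ d.1.det = 1 ∧ ∃ k : ℕ, d ^ p ^ k = 1 := Iff.rfl

/-- The homologies in the torus with centre the `i`-th coordinate line: those elements of
`torusP K p` which act as a scalar on the orthogonal complement of that line. -/
def homol (K : Type*) [Field K] [StarRing K] (p : ℕ) (i : Fin 3) : Subgroup (U K) where
  carrier := {d | d ∈ torusP K p ∧ ∀ j k, j ≠ i → k ≠ i → d.1 j j = d.1 k k}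
  one_mem' := ⟨one_mem _, fun j k _ _ => by simp⟩
  mul_mem' := by
    rintro a b ⟨ha, ha'⟩ ⟨hb, hb'⟩
    refine ⟨mul_mem ha hb, fun j k hj hk => ?_⟩
    rw [diagU_mul_left ha.1, diagU_mul_left ha.1, ha' j k hj hk, hb' j k hj hk]
  inv_mem' := by
    rintro a ⟨ha, ha'⟩
    refine ⟨inv_mem ha, fun j k hj hk => ?_⟩
    rw [unitary_inv_apply, unitary_inv_apply, ha' j k hj hk]

theorem mem_homol {d : U K} {i : Fin 3} :
    d ∈ homol K p i ↔ d ∈ torusP K p ∧ ∀ j k, j ≠ i → k ≠ i → d.1 j j = d.1 k k := Iff.rfl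

theorem homol_le (i : Fin 3) : homol K p i ≤ torusP K p := fun _ h => h.1

/-- The conjugate `u T u⁻¹`. -/
def conjSub {G : Type*} [Group G] (T : Subgroup G) (u : G) : Subgroup G :=
  T.comap (MulAut.conj u⁻¹).toMonoidHom

theorem mem_conjSub {G : Type*} [Group G] {T : Subgroup G} {u g : G} :
    g ∈ conjSub T u ↔ u⁻¹ * g * u ∈ T := by
  simp [conjSub, Subgroup.mem_comap]

theorem le_conjSub_mul {G : Type*} [Group G] {A T : Subgroup G} {u v : G} :
    A ≤ conjSub T (u * v) ↔ A.map (MulAut.conj u⁻¹).toMonoidHom ≤ conjSub T v := by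
  rw [Subgroup.map_le_iff_le_comap]
  refine forall₂_congr fun g _ => ?_
  rw [Subgroup.mem_comap, mem_conjSub, mem_conjSub]
  simp [mul_assoc]

theorem torusP_of_conj {g u : U K} (hg : g.1.det = 1 ∧ ∃ k : ℕ, g ^ p ^ k = 1)
    (h : u⁻¹ * g * u ∈ diagU K) : u⁻¹ * g * u ∈ torusP K p := by
  obtain ⟨hd, k, hk⟩ := hg
  refine ⟨h, ?_, k, ?_⟩
  · have h1 : (u⁻¹ * u).1.det = 1 := by simp
    rw [Matrix.UnitaryGroup.mul_val, Matrix.det_mul] at h1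
    rw [Matrix.UnitaryGroup.mul_val, Matrix.UnitaryGroup.mul_val, Matrix.det_mul, Matrix.det_mul,
      hd, mul_one, h1]
  · have := conj_pow (i := p ^ k) (a := u⁻¹) (b := g)
    rw [inv_inv] at this
    rw [this, hk]; simp

/-- The entries of the conjugation relation `g u = u d` for diagonal `g` and `d`. -/
theorem diag_conj_entry {g u : U K} (hg : g ∈ diagU K) (h : u⁻¹ * g * u ∈ diagU K) (j k : Fin 3)
    (hu : u.1 j k ≠ 0) : g.1 j j = (u⁻¹ * g * u).1 k k := by
  have h1 : g * u = u * (u⁻¹ * g * u) := by group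
  have h2 := diagU_mul_left hg u j k
  rw [h1, diagU_mul_right h, mul_comm] at h2
  exact (mul_right_cancel₀ hu h2).symm

/-- The permutation matrix of `σ`. -/
def permU (K : Type*) [Field K] [StarRing K] (σ : Equiv.Perm (Fin 3)) : U K :=
  ⟨Matrix.of fun i => Pi.single (σ i) 1, by
    rw [mem_unitary_iff_herm]
    intro i j
    change herm (Pi.single (σ i) 1) (Pi.single (σ j) 1) = _
    simp [herm_single]⟩

theorem permU_apply (σ : Equiv.Perm (Fin 3)) (i j : Fin 3) :
    (permU K σ).1 i j = if j = σ i then 1 else 0 := by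
  simp [permU, Pi.single_apply]

theorem permU_inv_mul (σ : Equiv.Perm (Fin 3)) (u : U K) (i j : Fin 3) :
    ((permU K σ)⁻¹ * u).1 i j = u.1 (σ.symm i) j := by
  rw [unitary_mul_apply, Finset.sum_eq_single (σ.symm i)]
  · simp [unitary_inv_apply, permU_apply]
  · intro k _ hk
    rw [unitary_inv_apply, permU_apply, if_neg, star_zero, zero_mul]
    rintro rfl; simp at hk
  · simp

theorem permU_conj (σ : Equiv.Perm (Fin 3)) (u : U K) (i j : Fin 3) :
    ((permU K σ)⁻¹ * u * permU K σ).1 i j = u.1 (σ.symm i) (σ.symm j) := by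
  rw [unitary_mul_apply, Finset.sum_eq_single (σ.symm j)]
  · simp [permU_inv_mul, permU_apply]
  · intro k _ hk
    rw [permU_apply, if_neg, mul_zero]
    rintro rfl; simp at hk
  · simp

theorem permU_conj_diag (σ : Equiv.Perm (Fin 3)) {g : U K} (hg : g ∈ diagU K) :
    (permU K σ)⁻¹ * g * permU K σ ∈ diagU K := fun i j h => by
  rw [permU_conj]; exact hg _ _ fun h' => h (σ.symm.injective h')

theorem homol_le_conj (i : Fin 3) :
    homol K p i ≤ conjSub (homol K p 0) (permU K (Equiv.swap 0 i)) := by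
  intro g hg
  rw [mem_conjSub]
  refine ⟨torusP_of_conj hg.1.2 (permU_conj_diag _ hg.1.1), fun j k hj hk => ?_⟩
  rw [permU_conj, permU_conj]
  apply hg.2
  · intro h; apply hj; rw [Equiv.symm_apply_eq] at h; simpa using h
  · intro h; apply hk; rw [Equiv.symm_apply_eq] at h; simpa using h

/-- A scalar element of the torus is trivial, since its order divides both `3` and a power
of `p`. -/
theorem torusP_scalar (hp : p.Prime) (hp3 : p ≠ 3) {d : U K} (hd : d ∈ torusP K p)
    (h : ∀ i, d.1 i i = d.1 0 0) : d = 1 := by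
  obtain ⟨hd, hdet, k, hk⟩ := hd
  rw [diagU_det hd, h 1, h 2] at hdet
  have h3 : d.1 0 0 ^ 3 = 1 := by rw [← hdet]; ring
  have hpk : d.1 0 0 ^ p ^ k = 1 := by
    rw [← diagU_pow hd, hk, unitary_one_apply, if_pos rfl]
  have hco : Nat.gcd 3 (p ^ k) = 1 :=
    Nat.Coprime.pow_right _ ((Nat.coprime_primes Nat.prime_three hp).2 (Ne.symm hp3))
  have h1 : d.1 0 0 = 1 := by
    rw [← pow_one (d.1 0 0), ← hco]
    exact pow_gcd_eq_one.2 ⟨h3, hpk⟩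
  exact diagU_ext hd (one_mem _) fun i => by rw [h i, h1, unitary_one_apply, if_pos rfl]

theorem homol_inf (hp : p.Prime) (hp3 : p ≠ 3) {i j : Fin 3} (hij : i ≠ j) :
    homol K p i ⊓ homol K p j = ⊥ := by
  rw [eq_bot_iff]
  rintro d ⟨hi, hj⟩
  rw [Subgroup.mem_bot]
  refine torusP_scalar hp hp3 hi.1 ?_
  obtain ⟨l, hli, hlj⟩ : ∃ l : Fin 3, l ≠ i ∧ l ≠ j :=
    (by decide : ∀ i j : Fin 3, ∃ l, l ≠ i ∧ l ≠ j) i j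
  have key : ∀ k, d.1 k k = d.1 l l := fun k => by
    by_cases hk : k = i
    · exact hj.2 k l (fun h => hij (hk.symm.trans h)) hlj
    · exact hi.2 k l hk hli
  exact fun k => (key k).trans (key 0).symm

theorem HermField.exists_pow_prime (hK : HermField K q) (hp : p.Prime) (hpq : p ∣ q + 1) :
    ∃ a : K, a ≠ 1 ∧ a ^ p = 1 ∧ a * star a = 1 := by
  have := hK.finite
  have := Fact.mk hp
  obtain ⟨x, hx⟩ := exists_prime_orderOf_dvd_card' (G := Kˣ) p
    (by rw [hK.card_units]; exact hpq.mul_right _)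
  have h1 : x ^ p = 1 := by rw [← hx]; exact pow_orderOf_eq_one x
  refine ⟨x, ?_, ?_, ?_⟩
  · intro h
    have : x = 1 := Units.ext h
    rw [this, orderOf_one] at hx
    exact hp.one_lt.ne hx
  · simpa using congrArg Units.val h1
  · rw [hK.star_eq, ← pow_succ']
    obtain ⟨c, hc⟩ := hpq
    have h2 : x ^ (q + 1) = 1 := by rw [hc, pow_mul, h1, one_pow]
    simpa using congrArg Units.val h2

theorem HermField.homol_ne_bot (hK : HermField K q) (hp : p.Prime) (hpq : p ∣ q + 1) (i : Fin 3) :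
    homol K p i ≠ ⊥ := by
  obtain ⟨a, ha1, hap, han⟩ := hK.exists_pow_prime hp hpq
  have hn : ∀ j, (if j = i then star a ^ 2 else a) * star (if j = i then star a ^ 2 else a) = 1 := by
    intro j
    split_ifs
    · rw [star_pow, star_star, ← mul_pow, mul_comm, han, one_pow]
    · exact han
  set d := mkDiag (fun j => if j = i then star a ^ 2 else a) hn with hd_def
  have hd : d ∈ diagU K := mkDiag_mem _ _
  have hda : ∀ j, d.1 j j = if j = i then star a ^ 2 else a := fun j => mkDiag_apply _ hn j
  have hmem : d ∈ homol K p i := by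
    refine ⟨⟨hd, ?_, 1, ?_⟩, fun j k hj hk => by rw [hda, hda, if_neg hj, if_neg hk]⟩
    · have key : a * a * star a ^ 2 = 1 := by
        rw [show a * a * star a ^ 2 = (a * star a) ^ 2 by ring, han, one_pow]
      rw [diagU_det hd, hda, hda, hda]
      fin_cases i <;> simp <;> linear_combination key
    · refine diagU_ext (pow_mem hd _) (one_mem _) fun j => ?_
      rw [diagU_pow hd, hda, unitary_one_apply, if_pos rfl, pow_one]
      split_ifs
      · rw [← pow_mul, mul_comm, pow_mul, ← star_pow, hap, star_one, one_pow]
      · exact hap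
  intro hbot
  rw [hbot, Subgroup.mem_bot] at hmem
  obtain ⟨j, hj⟩ : ∃ j : Fin 3, j ≠ i := exists_ne i
  have := hda j
  rw [hmem, unitary_one_apply, if_pos rfl, if_neg hj] at this
  exact ha1 this.symm

end Diag

/-! ### Frames and centres belonging to a `p`-subgroup -/

section Frames

variable {K : Type*} [Field K] [StarRing K] {q p : ℕ}

local notation "U" => Matrix.unitaryGroup (Fin 3)

theorem HermField.finite_U (hK : HermField K q) : Finite (U K) := by
  have := hK.finite
  exact Subtype.finite

/-- Every `p`-subgroup of `SU(3,q)` lies in a conjugate of the diagonal torus: it acts on the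
ordered orthogonal frames, whose number `q³ (q-1) (q²-q+1) ≡ 6` is prime to `p`. -/
theorem HermField.exists_frame (hK : HermField K q) (hp : p.Prime) (hp2 : p ≠ 2) (hp3 : p ≠ 3)
    (hpq : p ∣ q + 1) (A : Subgroup (U K))
    (hA : ∀ g ∈ A, g.1.det = 1 ∧ ∃ k : ℕ, g ^ p ^ k = 1) :
    ∃ u, A ≤ conjSub (torusP K p) u := by
  have := hK.finite_U
  have := Fact.mk hp
  have h2 := hK.two_le
  have hPA : IsPGroup p A := fun g => by
    obtain ⟨k, hk⟩ := (hA g g.2).2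
    exact ⟨k, Subtype.ext hk⟩
  have hcard : (Nat.card (U K ⧸ diagU K) : ℤ) = q ^ 3 * (q - 1) * (q ^ 2 - q + 1) := by
    have h := Subgroup.card_eq_card_quotient_mul_card_subgroup (diagU K)
    rw [hK.card_diagU] at h
    zify at h
    rw [hK.card_unitary_top] at h
    have hq : ((q : ℤ) + 1) ^ 3 ≠ 0 := by positivity
    exact mul_left_cancel₀ hq (by linear_combination -h)
  have hndvd : ¬ p ∣ Nat.card (U K ⧸ diagU K) := by
    intro h
    have h1 : (p : ℤ) ∣ q ^ 3 * (q - 1) * (q ^ 2 - q + 1) := by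
      rw [← hcard]; exact_mod_cast h
    have h3 : (p : ℤ) ∣ (q : ℤ) + 1 := by exact_mod_cast hpq
    have h6 : (p : ℤ) ∣ 6 := by
      -- the quotient of `q³(q-1)(q²-q+1) - 6` by `q + 1`
      have : (6 : ℤ) = q ^ 3 * (q - 1) * (q ^ 2 - q + 1) -
          (q + 1) * (q ^ 5 - 3 * q ^ 4 + 5 * q ^ 3 - 6 * q ^ 2 + 6 * q - 6) := by ring
      rw [this]
      exact dvd_sub h1 (h3.mul_right _)
    have h6' : p ∣ 2 * 3 := by exact_mod_cast h6
    rcases (hp.dvd_mul).1 h6' with h | h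
    · exact hp2 ((Nat.prime_dvd_prime_iff_eq hp Nat.prime_two).1 h)
    · exact hp3 ((Nat.prime_dvd_prime_iff_eq hp Nat.prime_three).1 h)
  obtain ⟨x, hx⟩ := hPA.nonempty_fixed_point_of_prime_not_dvd_card (U K ⧸ diagU K) hndvd
  induction x using QuotientGroup.induction_on with
  | H u =>
    refine ⟨u, fun g hg => ?_⟩
    rw [mem_conjSub]
    refine torusP_of_conj (hA g hg) ?_
    have h1 : ((g * u : U K) : U K ⧸ diagU K) = u := hx ⟨g, hg⟩
    have h2 := QuotientGroup.eq.1 h1.symm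
    rwa [← mul_assoc] at h2

/-- If a diagonal subgroup consists of homologies with a common centre, the centre is a
coordinate line: two of the three rows of the conjugating matrix meet the same eigenspace. -/
theorem exists_homol_of_conj {A : Subgroup (U K)} (hA : A ≤ torusP K p) {u : U K}
    (h : A ≤ conjSub (homol K p 0) u) : ∃ l, A ≤ homol K p l := by
  have entry : ∀ g ∈ A, ∀ j k, u.1 j k ≠ 0 → g.1 j j = (u⁻¹ * g * u).1 k k := fun g hg j k hu =>
    diag_conj_entry (hA hg).1 (mem_conjSub.1 (h hg)).1.1 j k hu
  have heq : ∀ g ∈ A, ∀ k k', k ≠ 0 → k' ≠ 0 →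
      (u⁻¹ * g * u).1 k k = (u⁻¹ * g * u).1 k' k' := fun g hg k k' hk hk' =>
    (mem_conjSub.1 (h hg)).2 k k' hk hk'
  have two : ∀ l, (∀ g ∈ A, ∀ j k, j ≠ l → k ≠ l → g.1 j j = g.1 k k) → A ≤ homol K p l :=
    fun l hl g hg => ⟨hA hg, hl g hg⟩
  have pair : ∃ j k : Fin 3, j ≠ k ∧ ∀ g ∈ A, g.1 j j = g.1 k k := by
    have cls : ∀ j k, (u.1 j 0 ≠ 0 ↔ u.1 k 0 ≠ 0) → ∀ g ∈ A, g.1 j j = g.1 k k := by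
      intro j k hjk g hg
      by_cases hj : u.1 j 0 = 0
      · have hk : u.1 k 0 = 0 := by by_contra hk; exact hjk.2 hk hj
        obtain ⟨a, ha⟩ := unitary_row_ne u j
        obtain ⟨b, hb⟩ := unitary_row_ne u k
        rw [entry g hg j a ha, entry g hg k b hb]
        exact heq g hg a b (by rintro rfl; exact ha hj) (by rintro rfl; exact hb hk)
      · rw [entry g hg j 0 hj, entry g hg k 0 (hjk.1 hj)]
    by_cases h01 : (u.1 0 0 ≠ 0 ↔ u.1 1 0 ≠ 0)
    · exact ⟨0, 1, by decide, cls 0 1 h01⟩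
    by_cases h02 : (u.1 0 0 ≠ 0 ↔ u.1 2 0 ≠ 0)
    · exact ⟨0, 2, by decide, cls 0 2 h02⟩
    · exact ⟨1, 2, by decide, cls 1 2 (by tauto)⟩
  obtain ⟨j, k, hjk, hg⟩ := pair
  obtain ⟨l, hl⟩ : ∃ l : Fin 3, ∀ m, m ≠ l → m = j ∨ m = k :=
    (by decide : ∀ j k : Fin 3, j ≠ k → ∃ l : Fin 3, ∀ m, m ≠ l → m = j ∨ m = k) j k hjk
  refine ⟨l, two l fun g hgA a b ha hb => ?_⟩
  rcases hl a ha with rfl | rfl <;> rcases hl b hb with rfl | rfl <;> first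
    | rfl
    | exact hg g hgA
    | exact (hg g hgA).symm

/-- For a diagonal subgroup which does not consist of homologies, any two coordinate characters
are distinguished by one of its elements. Hence it is diagonal only in the coordinate frame, and
the unitary matrices diagonalising it are exactly the monomial ones. -/
theorem HermField.card_frames (hK : HermField K q) {A : Subgroup (U K)} (hA : A ≤ torusP K p)
    (hreg : ∀ l, ¬ A ≤ homol K p l) :
    Nat.card {u : U K // A ≤ conjSub (torusP K p) u} = 6 * (q + 1) ^ 3 := by
  have sep : ∀ j k : Fin 3, j ≠ k → ∃ g ∈ A, g.1 j j ≠ g.1 k k := by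
    intro j k hjk
    by_contra! hg
    obtain ⟨l, hl⟩ : ∃ l : Fin 3, ∀ m, m ≠ l → m = j ∨ m = k :=
      (by decide : ∀ j k : Fin 3, j ≠ k → ∃ l : Fin 3, ∀ m, m ≠ l → m = j ∨ m = k) j k hjk
    refine hreg l fun g hgA => ⟨hA hgA, fun a b ha hb => ?_⟩
    rcases hl a ha with rfl | rfl <;> rcases hl b hb with rfl | rfl <;> first
      | rfl
      | exact hg g hgA
      | exact (hg g hgA).symm
  have hmem : ∀ (σ : Equiv.Perm (Fin 3)) (d : diagU K),
      A ≤ conjSub (torusP K p) (permU K σ * d) := by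
    intro σ d g hg
    rw [mem_conjSub]
    refine torusP_of_conj (hA hg).2 ?_
    have h1 : (permU K σ * (d : U K))⁻¹ * g * (permU K σ * d) =
        (d : U K)⁻¹ * ((permU K σ)⁻¹ * g * permU K σ) * d := by group
    rw [h1]
    exact mul_mem (mul_mem (inv_mem d.2) (permU_conj_diag σ (hA hg).1)) d.2
  have e : Nat.card (Equiv.Perm (Fin 3) × diagU K) =
      Nat.card {u : U K // A ≤ conjSub (torusP K p) u} := by
    refine Nat.card_congr (Equiv.ofBijective
      (fun x => ⟨permU K x.1 * x.2, hmem x.1 x.2⟩) ⟨?_, ?_⟩)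
    · rintro ⟨σ, d, hd⟩ ⟨τ, e, he⟩ h
      have h' : permU K σ * d = permU K τ * e := congrArg Subtype.val h
      have hστ : σ = τ := by
        ext1 i
        by_contra hne
        have h1 := diagU_mul_right hd (permU K σ) i (σ i)
        rw [h', diagU_mul_right he, permU_apply, permU_apply, if_neg hne, if_pos rfl, zero_mul,
          one_mul] at h1
        exact diagU_ne hd _ h1.symm
      subst hστ
      have := mul_left_cancel h'
      simp [this]
    · rintro ⟨u, hu⟩
      have entry : ∀ g ∈ A, ∀ j k, u.1 j k ≠ 0 → g.1 j j = (u⁻¹ * g * u).1 k k :=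
        fun g hg j k huk => diag_conj_entry (hA hg).1 (mem_conjSub.1 (hu hg)).1 j k huk
      have col : ∀ i j k, u.1 i k ≠ 0 → u.1 j k ≠ 0 → i = j := by
        intro i j k hi hj
        by_contra hij
        obtain ⟨g, hg, hne⟩ := sep i j hij
        exact hne ((entry g hg i k hi).trans (entry g hg j k hj).symm)
      choose s hs using unitary_row_ne u
      have hinj : Function.Injective s := fun i j hij => col i j (s i) (hs i) (hij ▸ hs j)
      let σ : Equiv.Perm (Fin 3) := Equiv.ofBijective s (Finite.injective_iff_bijective.1 hinj)
      have hd : (permU K σ)⁻¹ * u ∈ diagU K := by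
        intro i k hik
        rw [permU_inv_mul]
        by_contra hne
        have h1 : s (σ.symm i) = i := σ.apply_symm_apply i
        have h2 : s (σ.symm k) = k := σ.apply_symm_apply k
        have h3 := hs (σ.symm k)
        rw [h2] at h3
        have := col _ _ _ hne h3
        exact hik (σ.symm.injective this)
      exact ⟨(σ, ⟨_, hd⟩), Subtype.ext (mul_inv_cancel_left _ _)⟩
  rw [← e, Nat.card_prod, hK.card_diagU, Nat.card_eq_fintype_card, Fintype.card_perm,
    Fintype.card_fin]
  rfl

/-- A nontrivial group of homologies determines its centre, so the matrices conjugating it into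
the homologies with centre the first coordinate line are those which fix this line. -/
theorem HermField.conj_homol_iff (hK : HermField K q) (hp : p.Prime) (hp3 : p ≠ 3)
    {A : Subgroup (U K)} (hA : A ≤ homol K p 0) (hne : A ≠ ⊥) (u : U K) :
    A ≤ conjSub (homol K p 0) u ↔ u.1 0 1 = 0 ∧ u.1 0 2 = 0 := by
  constructor
  · intro h
    obtain ⟨g, hg, hg1⟩ : ∃ g ∈ A, g ≠ 1 := (Subgroup.bot_or_exists_ne_one A).resolve_left hne
    have hgd := (hA hg).1
    have hd := mem_conjSub.1 (h hg)
    have entry := diag_conj_entry hgd.1 hd.1.1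
    have hg12 := (hA hg).2 1 2 (by decide) (by decide)
    have hd12 := hd.2 1 2 (by decide) (by decide)
    have hgdet := hgd.2.1
    have hddet := hd.1.2.1
    rw [diagU_det hgd.1] at hgdet
    rw [diagU_det hd.1.1] at hddet
    have hne01 : g.1 0 0 ≠ g.1 1 1 := by
      intro h01
      refine hg1 (torusP_scalar hp hp3 hgd fun i => ?_)
      fin_cases i
      · rfl
      · exact h01.symm
      · exact hg12.symm.trans h01.symm
    generalize u⁻¹ * g * u = d at *
    rw [← hg12] at hgdet
    rw [← hd12] at hddet
    have hgu : ∀ j k, j ≠ 0 → u.1 j k ≠ 0 → g.1 1 1 = d.1 k k := by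
      intro j k hj hjk
      rw [← entry j k hjk]
      exact (hA hg).2 1 j (by decide) hj
    have hdu : ∀ j k, k ≠ 0 → u.1 j k ≠ 0 → g.1 j j = d.1 1 1 := by
      intro j k hk hjk
      rw [entry j k hjk]
      exact hd.2 k 1 hk (by decide)
    by_cases h00 : u.1 0 0 = 0
    · exfalso
      obtain ⟨k, hk⟩ := unitary_row_ne u 0
      obtain ⟨j, hj⟩ := unitary_col_ne u 0
      have e1 := hdu 0 k (by rintro rfl; exact hk h00) hk
      have e2 := hgu j 0 (by rintro rfl; exact hj h00) hj
      rw [← e1, ← e2] at hddet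
      have ha : g.1 0 0 ≠ 0 := diagU_ne hgd.1 0
      have hb : g.1 1 1 ≠ 0 := diagU_ne hgd.1 1
      apply hne01
      refine mul_left_cancel₀ (mul_ne_zero ha hb) ?_
      linear_combination hddet - hgdet
    · have e0 := entry 0 0 h00
      have hab : g.1 1 1 = d.1 1 1 := by
        have ha : g.1 0 0 ≠ 0 := diagU_ne hgd.1 0
        rw [← e0] at hddet
        have hsq : (g.1 1 1 - d.1 1 1) ^ 2 = 0 := by
          refine mul_left_cancel₀ ha ?_
          linear_combination hgdet - hddet +
            g.1 0 0 * (d.1 1 1 ^ 2 - g.1 1 1 * d.1 1 1) * hK.two_eq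
        exact sub_eq_zero.1 (pow_eq_zero_iff (two_ne_zero) |>.1 hsq)
      constructor
      · by_contra hne1
        exact hne01 ((hdu 0 1 (by decide) hne1).trans hab.symm)
      · by_contra hne1
        exact hne01 ((hdu 0 2 (by decide) hne1).trans hab.symm)
  · rintro ⟨h1, h2⟩ g hg
    have h00 : u.1 0 0 ≠ 0 := by
      obtain ⟨k, hk⟩ := unitary_row_ne u 0
      fin_cases k
      · exact hk
      · exact absurd h1 hk
      · exact absurd h2 hk
    have hi0 : ∀ i, i ≠ 0 → u.1 i 0 = 0 := by
      intro i hi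
      have := mem_unitary_iff_herm.1 u.2 i 0
      rw [if_neg hi, herm, Fin.sum_univ_three, h1, h2, star_zero, mul_zero, mul_zero, add_zero,
        add_zero] at this
      exact (mul_eq_zero.1 this).resolve_right (star_ne_zero.2 h00)
    have h0k : ∀ k, k ≠ 0 → u.1 0 k = 0 := by
      intro k hk
      fin_cases k
      · exact absurd rfl hk
      · exact h1
      · exact h2
    have hcomm : g * u = u * g := by
      apply Matrix.UnitaryGroup.ext
      intro i j
      have hgi := hA hg
      refine (diagU_mul_left hgi.1.1 u i j).trans (Eq.trans ?_ (diagU_mul_right hgi.1.1 u i j).symm)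
      by_cases hi : i = 0
      · by_cases hj : j = 0
        · rw [hi, hj, mul_comm]
        · rw [hi, h0k j hj, mul_zero, zero_mul]
      · by_cases hj : j = 0
        · rw [hj, hi0 i hi, mul_zero, zero_mul]
        · rw [hgi.2 i j hi hj, mul_comm]
    rw [mem_conjSub, mul_assoc, hcomm, inv_mul_cancel_left]
    exact hA hg

end Frames

section Conjugates

variable {K : Type*} [Field K] [StarRing K] {q p : ℕ}

local notation "U" => Matrix.unitaryGroup (Fin 3)

theorem le_conjSub_iff {G : Type*} [Group G] {A T : Subgroup G} {u : G} :
    A ≤ conjSub T u ↔ A.map (MulAut.conj u⁻¹).toMonoidHom ≤ T :=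
  Subgroup.map_le_iff_le_comap.symm

theorem card_conjSub_translate {G : Type*} [Group G] (A T : Subgroup G) (u : G) :
    Nat.card {v // A ≤ conjSub T v} =
      Nat.card {v // A.map (MulAut.conj u⁻¹).toMonoidHom ≤ conjSub T v} :=
  (Nat.card_congr ((Equiv.mulLeft u).subtypeEquiv fun _ => le_conjSub_mul.symm)).symm

theorem le_conj_homol_zero {A : Subgroup (U K)} {i : Fin 3} {u : U K}
    (h : A ≤ conjSub (homol K p i) u) :
    A ≤ conjSub (homol K p 0) (u * permU K (Equiv.swap 0 i)) :=
  le_conjSub_mul.2 ((le_conjSub_iff.1 h).trans (homol_le_conj i))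

theorem HermField.card_frames_conj (hK : HermField K q) {A : Subgroup (U K)} {u : U K}
    (hu : A ≤ conjSub (torusP K p) u) (hreg : ∀ l v, ¬ A ≤ conjSub (homol K p l) v) :
    Nat.card {v // A ≤ conjSub (torusP K p) v} = 6 * (q + 1) ^ 3 := by
  rw [card_conjSub_translate A _ u]
  exact hK.card_frames (le_conjSub_iff.1 hu) fun l hl => hreg l u (le_conjSub_iff.2 hl)

theorem HermField.card_centres_conj (hK : HermField K q) (hp : p.Prime) (hp3 : p ≠ 3)
    {A : Subgroup (U K)} (hne : A ≠ ⊥) {u : U K} {i : Fin 3}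
    (hu : A ≤ conjSub (homol K p i) u) :
    (Nat.card {v // A ≤ conjSub (homol K p 0) v} : ℤ) = (q + 1) ^ 3 * (q ^ 2 - q) := by
  rw [card_conjSub_translate A _ (u * permU K (Equiv.swap 0 i)), ← hK.card_unitary_stab]
  have hne' : A.map (MulAut.conj (u * permU K (Equiv.swap 0 i))⁻¹).toMonoidHom ≠ ⊥ := by
    intro h
    exact hne ((Subgroup.map_eq_bot_iff_of_injective _ (MulEquiv.injective _)).1 h)
  congr 1
  exact Nat.card_congr (Equiv.subtypeEquivRight fun v =>
    hK.conj_homol_iff hp hp3 (le_conjSub_iff.1 (le_conj_homol_zero hu)) hne' v)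

theorem exists_homol_conj {A : Subgroup (U K)} {u v : U K} {i : Fin 3}
    (hu : A ≤ conjSub (torusP K p) u) (hv : A ≤ conjSub (homol K p i) v) :
    ∃ l, A ≤ conjSub (homol K p l) u := by
  have h := le_conj_homol_zero hv
  rw [show v * permU K (Equiv.swap 0 i) = u * (u⁻¹ * (v * permU K (Equiv.swap 0 i))) by group,
    le_conjSub_mul] at h
  obtain ⟨l, hl⟩ := exists_homol_of_conj (le_conjSub_iff.1 hu) h
  exact ⟨l, le_conjSub_iff.2 hl⟩

end Conjugates

/-! ### The Möbius sum -/

/-- Double counting with the Möbius relation. The subgroups `P u` are the tori of the frames `u`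
and `Z i u` the group of homologies of the torus `P u` with centre the `i`-th line of `u`. Since
`m` sums to `-1` over the nontrivial subgroups of each `P u` and of each `Z i u`, and every
nontrivial subgroup of `P u` which consists of homologies lies in exactly one of the three `Z i u`,
the non-homology subgroups of each `P u` contribute `-1 + 3 = 2`. -/
theorem mobius_sum {G ι : Type*} [Group G] [Finite G] [Finite ι] {p : ℕ} {m : Subgroup G → ℤ}
    (hm : IsPMobiusBot p m) (P : ι → Subgroup G) (Z : Fin 3 → ι → Subgroup G)
    (hP : ∀ u, IsPGroup p (P u)) (hZP : ∀ i u, Z i u ≤ P u) (hZ : ∀ i u, Z i u ≠ ⊥)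
    (hZZ : ∀ u i j, i ≠ j → Z i u ⊓ Z j u = ⊥)
    (hhom : ∀ u H, H ≤ P u → (∃ i v, H ≤ Z i v) → ∃ i, H ≤ Z i u) (a b : ℤ)
    (ha : ∀ H : Subgroup G, IsPGroup p H → H ≠ ⊥ → (¬ ∃ i v, H ≤ Z i v) →
      (Nat.card {u // H ≤ P u} : ℤ) = a)
    (hb : ∀ H : Subgroup G, IsPGroup p H → H ≠ ⊥ → (∃ i v, H ≤ Z i v) →
      (Nat.card {u // H ≤ Z 0 u} : ℤ) = b) :
    ∃ s t : ℤ, (∑ᶠ H ∈ {H : Subgroup G | IsPGroup p H ∧ H ≠ ⊥}, m H) = s + t ∧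
      a * s = 2 * Nat.card ι ∧ b * t = - Nat.card ι := by
  let _ := Fintype.ofFinite ι
  let _ := Fintype.ofFinite (Subgroup G)
  let hom : Subgroup G → Prop := fun H => ∃ i v, H ≤ Z i v
  have below : ∀ T : Subgroup G, IsPGroup p T → T ≠ ⊥ →
      ∑ H with H ≠ ⊥ ∧ H ≤ T, m H = -1 := by
    intro T hT hne
    have h := hm.2 T hT (bot_lt_iff_ne_bot.2 hne)
    rw [finsum_mem_eq_sum_of_inter_support_eq (t := Finset.univ.filter fun H => H ≤ T)] at h
    · have hins : (Finset.univ.filter fun H : Subgroup G => H ≤ T) =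
          insert ⊥ (Finset.univ.filter fun H => H ≠ ⊥ ∧ H ≤ T) := by
        ext H
        by_cases hH : H = ⊥ <;> simp [hH]
      rw [hins, Finset.sum_insert (by simp), hm.1] at h
      linarith
    · ext H
      simp only [Finset.coe_filter, Finset.mem_univ, true_and, Set.mem_inter_iff]
      exact and_congr_left fun _ => ⟨fun h => h.2, fun h => ⟨hT.to_le h, h⟩⟩
  have pow : ∀ {u H}, H ≤ P u → IsPGroup p H := fun h => (hP _).to_le h
  -- the non-homology subgroups of a fixed torus
  have regsum : ∀ u, ∑ H with H ≠ ⊥ ∧ ¬ hom H ∧ H ≤ P u, m H = 2 := by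
    intro u
    have hne : P u ≠ ⊥ := fun h => hZ 0 u (le_bot_iff.1 (h ▸ hZP 0 u))
    have h1 := below (P u) (hP u) hne
    have hsplit : (Finset.univ.filter fun H : Subgroup G => H ≠ ⊥ ∧ H ≤ P u) =
        (Finset.univ.filter fun H => H ≠ ⊥ ∧ ¬ hom H ∧ H ≤ P u) ∪
        (Finset.univ : Finset (Fin 3)).biUnion
          fun i => Finset.univ.filter fun H => H ≠ ⊥ ∧ H ≤ Z i u := by
      ext H
      simp only [Finset.mem_union, Finset.mem_biUnion, Finset.mem_filter, Finset.mem_univ, true_and]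
      constructor
      · rintro ⟨hH, hHP⟩
        by_cases hh : hom H
        · obtain ⟨i, hi⟩ := hhom u H hHP hh
          exact Or.inr ⟨i, hH, hi⟩
        · exact Or.inl ⟨hH, hh, hHP⟩
      · rintro (⟨hH, -, hHP⟩ | ⟨i, hH, hi⟩)
        · exact ⟨hH, hHP⟩
        · exact ⟨hH, hi.trans (hZP i u)⟩
    rw [hsplit, Finset.sum_union, Finset.sum_biUnion] at h1
    · rw [Finset.sum_congr rfl fun i _ => below (Z i u) (pow (hZP i u)) (hZ i u)] at h1
      simp at h1
      linarith
    · intro i _ j _ hij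
      refine Finset.disjoint_left.2 fun H hi hj => ?_
      simp only [Finset.mem_filter, Finset.mem_univ, true_and] at hi hj
      exact hi.1 (le_bot_iff.1 (hZZ u i j hij ▸ le_inf hi.2 hj.2))
    · refine Finset.disjoint_left.2 fun H hi hj => ?_
      simp only [Finset.mem_biUnion, Finset.mem_filter, Finset.mem_univ, true_and] at hi hj
      obtain ⟨i, -, hj⟩ := hj
      exact hi.2.1 ⟨i, u, hj⟩
  refine ⟨∑ H ∈ Finset.univ.filter (fun H : Subgroup G => IsPGroup p H ∧ H ≠ ⊥ ∧ ¬ hom H), m H,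
    ∑ H ∈ Finset.univ.filter (fun H : Subgroup G => IsPGroup p H ∧ H ≠ ⊥ ∧ hom H), m H, ?_, ?_, ?_⟩
  · rw [finsum_mem_eq_sum_of_inter_support_eq
      (t := Finset.univ.filter fun H : Subgroup G => IsPGroup p H ∧ H ≠ ⊥), ← Finset.sum_union]
    · refine Finset.sum_congr ?_ fun _ _ => rfl
      ext H
      simp only [Finset.mem_union, Finset.mem_filter, Finset.mem_univ, true_and]
      tauto
    · refine Finset.disjoint_left.2 fun H hi hj => ?_
      simp only [Finset.mem_filter, Finset.mem_univ, true_and] at hi hj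
      exact hi.2.2 hj.2.2
    · ext H
      simp
  · have h2 : ∑ u : ι, ∑ H with H ≠ ⊥ ∧ ¬ hom H ∧ H ≤ P u, m H = 2 * Nat.card ι := by
      rw [Finset.sum_congr rfl fun u _ => regsum u]
      simp [mul_comm]
    rw [← h2, Finset.mul_sum]
    simp only [Finset.sum_filter]
    rw [Finset.sum_comm]
    refine Finset.sum_congr rfl fun H _ => ?_
    by_cases hH : IsPGroup p H ∧ H ≠ ⊥ ∧ ¬ hom H
    · rw [if_pos hH, ← ha H hH.1 hH.2.1 hH.2.2, Nat.card_eq_fintype_card, Fintype.card_subtype]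
      simp [hH.2.1, hH.2.2, ← Finset.sum_filter]
    · rw [if_neg hH, Finset.sum_eq_zero]
      intro u _
      rw [if_neg]
      exact fun h => hH ⟨pow h.2.2, h.1, h.2.1⟩
  · have h2 : ∑ u : ι, ∑ H with H ≠ ⊥ ∧ H ≤ Z 0 u, m H = - Nat.card ι := by
      rw [Finset.sum_congr rfl fun u _ => below (Z 0 u) (pow (hZP 0 u)) (hZ 0 u)]
      simp
    rw [← h2, Finset.mul_sum]
    simp only [Finset.sum_filter]
    rw [Finset.sum_comm]
    refine Finset.sum_congr rfl fun H _ => ?_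
    by_cases hH : IsPGroup p H ∧ H ≠ ⊥ ∧ hom H
    · rw [if_pos hH, ← hb H hH.1 hH.2.1 hH.2.2, Nat.card_eq_fintype_card, Fintype.card_subtype]
      simp [hH.2.1, ← Finset.sum_filter]
    · rw [if_neg hH, Finset.sum_eq_zero]
      intro u _
      rw [if_neg]
      exact fun h => hH ⟨pow (h.2.trans (hZP 0 u)), h.1, 0, u, h.2⟩

/-! ### The group `PSU(3,q)` -/

theorem hermField_Fq2 (n : ℕ) : HermField (Fq2 n) (qval n) where
  two_le := by
    calc 2 = 2 ^ 1 := rfl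
      _ ≤ 2 ^ 2 ^ n := Nat.pow_le_pow_right (by norm_num) Nat.one_le_two_pow
  two_eq := by exact_mod_cast CharP.cast_eq_zero (Fq2 n) 2
  card := by
    rw [GaloisField.card 2 (2 ^ (n + 1)) (by positivity), ← pow_mul, pow_succ]
  star_eq _ := rfl

theorem qval_mod_three {n : ℕ} (hn : 1 ≤ n) : qval n % 3 = 1 := by
  obtain ⟨k, rfl⟩ := Nat.exists_eq_add_of_le hn
  rw [qval, pow_add, pow_one, pow_mul, Nat.pow_mod]
  norm_num

/-- As `q` is an even square, `q + 1` is prime to 6. -/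
theorem prime_ne_of_dvd {n p : ℕ} (hn : 1 ≤ n) (hpq : p ∣ qval n + 1) : p ≠ 2 ∧ p ≠ 3 := by
  have h3 := qval_mod_three hn
  have h2 : qval n % 2 = 0 := Nat.mod_eq_zero_of_dvd (dvd_pow_self 2 (by positivity))
  constructor <;> rintro rfl <;> omega

/-- An element of `SU(3,q)` which commutes with a diagonal element with distinct entries is
diagonal; if it also commutes with a cyclic permutation of the coordinates it is a scalar `z` with
`z ^ 3 = 1 = z ^ (q + 1)`, hence trivial. -/
theorem center_SU3 {n p : ℕ} (hn : 1 ≤ n) (hp : p.Prime) (hpq : p ∣ qval n + 1) :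
    Subgroup.center (SU3 n) = ⊥ := by
  have hK := hermField_Fq2 n
  obtain ⟨hp2, -⟩ := prime_ne_of_dvd hn hpq
  obtain ⟨a, ha1, hap, haa⟩ := hK.exists_pow_prime hp hpq
  have ha0 : a ≠ 0 := by rintro rfl; simp at haa
  have hsa : star a ≠ 1 := by
    intro h; rw [h, mul_one] at haa; exact ha1 haa
  have haas : a ≠ star a := by
    intro h
    rw [← h, ← sq] at haa
    have h1 : orderOf a ∣ 2 := orderOf_dvd_of_pow_eq_one haa
    have h2 : orderOf a ∣ p := orderOf_dvd_of_pow_eq_one hap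
    have h3 := Nat.eq_one_of_dvd_coprimes ((Nat.coprime_primes hp Nat.prime_two).2 hp2) h2 h1
    exact ha1 (orderOf_eq_one_iff.1 h3)
  rw [eq_bot_iff]
  intro z hz
  rw [Subgroup.mem_center_iff] at hz
  rw [Subgroup.mem_bot]
  have hcomm : ∀ g : Matrix.unitaryGroup (Fin 3) (Fq2 n), g.1.det = 1 → g * z.1 = z.1 * g :=
    fun g hg => congrArg Subtype.val (hz ⟨g, hg⟩)
  have hdn : ∀ i, (![a, star a, 1] : Fin 3 → Fq2 n) i * star ((![a, star a, 1] : Fin 3 → Fq2 n) i)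
      = 1 := by
    intro i
    fin_cases i
    · simpa using haa
    · simpa [mul_comm] using haa
    · simp
  have hd := hcomm (mkDiag _ hdn) (by
    rw [mkDiag, Matrix.det_diagonal, Fin.prod_univ_three]
    simpa using haa)
  have hinj : Function.Injective (![a, star a, 1] : Fin 3 → Fq2 n) := by
    intro i j
    fin_cases i <;> fin_cases j <;> simp [ha1, hsa, haas, haas.symm, Ne.symm ha1, Ne.symm hsa]
  have hdiag : z.1 ∈ diagU (Fq2 n) := by
    intro i j hij
    have h := congrArg (fun u : Matrix.unitaryGroup (Fin 3) (Fq2 n) => u.1 i j) hd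
    change (mkDiag _ hdn * z.1).1 i j = (z.1 * mkDiag _ hdn).1 i j at h
    rw [diagU_mul_left (mkDiag_mem _ _), diagU_mul_right (mkDiag_mem _ _), mkDiag_apply,
      mkDiag_apply] at h
    by_contra h0
    rw [mul_comm] at h
    exact hij (hinj (mul_left_cancel₀ h0 h))
  have hrot := hcomm (permU (Fq2 n) (finRotate 3)) (by
    have : (permU (Fq2 n) (finRotate 3)).1 = !![0, 1, 0; 0, 0, 1; 1, 0, 0] := by
      ext i j
      rw [permU_apply]
      fin_cases i <;> fin_cases j <;> simp
    rw [this, Matrix.det_fin_three]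
    simp)
  have hsc : ∀ i, z.1.1 ((finRotate 3).symm i) ((finRotate 3).symm i) = z.1.1 i i := by
    intro i
    rw [← permU_conj, mul_assoc, ← hrot, inv_mul_cancel_left]
  have h10 : z.1.1 1 1 = z.1.1 0 0 := by
    have := hsc 1
    rwa [show (finRotate 3).symm 1 = 0 by decide, eq_comm] at this
  have h21 : z.1.1 2 2 = z.1.1 0 0 := by
    have := hsc 2
    rwa [show (finRotate 3).symm 2 = 1 by decide, h10, eq_comm] at this
  have hdet : z.1.1.det = 1 := z.2
  rw [diagU_det hdiag, h10, h21] at hdet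
  have hnorm : z.1.1 0 0 ^ (qval n + 1) = 1 := by
    have h := mem_unitary_iff_herm.1 z.1.2 0 0
    rw [herm, Fin.sum_univ_three, hdiag 0 1 (by decide), hdiag 0 2 (by decide)] at h
    rw [pow_succ', ← hK.star_eq]
    simpa using h
  have hone : z.1.1 0 0 = 1 := by
    have h1 : orderOf (z.1.1 0 0) ∣ 3 := orderOf_dvd_of_pow_eq_one (by rw [← hdet]; ring)
    have h2 := orderOf_dvd_of_pow_eq_one hnorm
    have hc : Nat.Coprime 3 (qval n + 1) := by
      rw [Nat.Prime.coprime_iff_not_dvd Nat.prime_three]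
      have := qval_mod_three hn
      omega
    exact orderOf_eq_one_iff.1 (Nat.eq_one_of_dvd_coprimes hc h1 h2)
  refine Subtype.ext (diagU_ext hdiag (one_mem _) fun i => ?_)
  fin_cases i <;> simp [h10, h21, hone]

/-- `PSU(3,q)` as the group of unitary matrices of determinant 1, the centre of `SU(3,q)` being
trivial. -/
theorem exists_embedding {n p : ℕ} (hn : 1 ≤ n) (hp : p.Prime) (hpq : p ∣ qval n + 1) :
    ∃ f : PSU3 n →* Matrix.unitaryGroup (Fin 3) (Fq2 n), Function.Injective f ∧
      ∀ g, g ∈ f.range ↔ g.1.det = 1 := by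
  let e : PSU3 n ≃* SU3 n :=
    (QuotientGroup.quotientMulEquivOfEq (center_SU3 hn hp hpq)).trans QuotientGroup.quotientBot
  refine ⟨(SU3 n).subtype.comp e.toMonoidHom, fun x y h => e.injective (Subtype.ext h),
    fun g => ⟨?_, fun h => ?_⟩⟩
  · rintro ⟨x, rfl⟩
    exact (e x).2
  · exact ⟨e.symm ⟨g, h⟩, by simp⟩

theorem conjSub_mono {G : Type*} [Group G] {S T : Subgroup G} (h : S ≤ T) (u : G) :
    conjSub S u ≤ conjSub T u :=
  Subgroup.comap_mono h

theorem conj_torusP_spec {K : Type*} [Field K] [StarRing K] {p : ℕ}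
    {u g : Matrix.unitaryGroup (Fin 3) K} (hg : g ∈ conjSub (torusP K p) u) :
    g.1.det = 1 ∧ ∃ k : ℕ, g ^ p ^ k = 1 := by
  obtain ⟨-, hdet, k, hk⟩ := mem_torusP.1 (mem_conjSub.1 hg)
  refine ⟨?_, k, ?_⟩
  · have h : g = u * (u⁻¹ * g * u) * u⁻¹ := by group
    rw [h, Matrix.UnitaryGroup.mul_val, Matrix.UnitaryGroup.mul_val, Matrix.det_mul,
      Matrix.det_mul, hdet, mul_one, ← Matrix.det_mul, ← Matrix.UnitaryGroup.mul_val,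
      mul_inv_cancel]
    simp
  · have h : u⁻¹ * g * u = MulAut.conj u⁻¹ g := by simp
    rw [h, ← map_pow] at hk
    exact (MulEquiv.map_eq_one_iff _).1 hk

theorem stmt18 (n : ℕ) (hn : 1 ≤ n) (p : ℕ) (hp : p.Prime) (hpq : p ∣ qval n + 1)
    (m : Subgroup (PSU3 n) → ℤ) (hm : IsPMobiusBot p m) :
    (∑ᶠ H ∈ {H : Subgroup (PSU3 n) | IsPGroup p H ∧ H ≠ ⊥}, m H) =
      ((qval n : ℤ) ^ 6 - 2 * (qval n : ℤ) ^ 5 - (qval n : ℤ) ^ 4 + 2 * (qval n : ℤ) ^ 3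
        - 3 * (qval n : ℤ) ^ 2) / 3 := by
  have hK := hermField_Fq2 n
  obtain ⟨hp2, hp3⟩ := prime_ne_of_dvd hn hpq
  obtain ⟨f, hf, hrange⟩ := exists_embedding hn hp hpq
  have := hK.finite_U
  have : Finite (PSU3 n) := Finite.of_injective f hf
  have hmap : ∀ (H : Subgroup (PSU3 n)) (T : Subgroup (Matrix.unitaryGroup (Fin 3) (Fq2 n))),
      H ≤ T.comap f ↔ H.map f ≤ T := fun _ _ => Subgroup.map_le_iff_le_comap.symm
  have hmapbot : ∀ H : Subgroup (PSU3 n), H ≠ ⊥ → H.map f ≠ ⊥ := fun H hH h =>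
    hH ((Subgroup.map_eq_bot_iff_of_injective _ hf).1 h)
  obtain ⟨s, t, hst, hs, ht⟩ := mobius_sum hm
    (fun u => (conjSub (torusP (Fq2 n) p) u).comap f)
    (fun i u => (conjSub (homol (Fq2 n) p i) u).comap f)
    (by
      rintro u ⟨g, hg⟩
      obtain ⟨k, hk⟩ := (conj_torusP_spec hg).2
      rw [← map_pow] at hk
      exact ⟨k, Subtype.ext (hf (hk.trans (map_one f).symm))⟩)
    (fun i u => Subgroup.comap_mono (conjSub_mono (homol_le i) u))
    (by
      intro i u h
      refine hK.homol_ne_bot hp hpq i (eq_bot_iff.2 fun g hg => ?_)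
      have hg' : u * g * u⁻¹ ∈ conjSub (homol (Fq2 n) p i) u := by
        rw [mem_conjSub]
        convert hg using 1
        group
      obtain ⟨x, hx⟩ := (hrange _).2 (conj_torusP_spec (conjSub_mono (homol_le i) u hg')).1
      have hx1 : x ∈ (⊥ : Subgroup (PSU3 n)) := h ▸ (show f x ∈ _ from hx ▸ hg')
      rw [Subgroup.mem_bot] at hx1
      rw [hx1, map_one, eq_comm, conj_eq_one_iff] at hx
      exact hx)
    (by
      intro u i j hij
      rw [eq_bot_iff]
      rintro x ⟨hi, hj⟩
      have h : u⁻¹ * f x * u ∈ homol (Fq2 n) p i ⊓ homol (Fq2 n) p j :=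
        ⟨mem_conjSub.1 hi, mem_conjSub.1 hj⟩
      rw [homol_inf hp hp3 hij, Subgroup.mem_bot] at h
      refine hf ?_
      rw [map_one]
      have h' := conj_eq_one_iff (a := u⁻¹) (b := f x)
      rw [inv_inv] at h'
      exact h'.1 h)
    (by
      rintro u H hH ⟨i, v, hv⟩
      obtain ⟨l, hl⟩ := exists_homol_conj ((hmap _ _).1 hH) ((hmap _ _).1 hv)
      exact ⟨l, (hmap _ _).2 hl⟩)
    (6 * ((qval n : ℤ) + 1) ^ 3) (((qval n : ℤ) + 1) ^ 3 * ((qval n : ℤ) ^ 2 - qval n))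
    (by
      intro H hH _ hreg
      obtain ⟨u, hu⟩ := hK.exists_frame hp hp2 hp3 hpq (H.map f) (by
        rintro _ ⟨x, hx, rfl⟩
        refine ⟨(hrange _).1 ⟨x, rfl⟩, ?_⟩
        obtain ⟨k, hk⟩ := hH ⟨x, hx⟩
        refine ⟨k, ?_⟩
        rw [← map_pow, show x ^ p ^ k = 1 from congrArg Subtype.val hk, map_one])
      simp only [hmap]
      rw [hK.card_frames_conj hu fun l v h => hreg ⟨l, v, (hmap _ _).2 h⟩]
      push_cast
      ring)
    (by
      rintro H - hne ⟨i, v, hv⟩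
      simp only [hmap]
      exact hK.card_centres_conj hp hp3 (hmapbot H hne) ((hmap _ _).1 hv))
  rw [hst]
  rw [hK.card_unitary_top] at hs ht
  have hq : (2 : ℤ) ≤ qval n := by exact_mod_cast hK.two_le
  generalize (qval n : ℤ) = q at *
  have h1 : (q + 1) ^ 3 ≠ 0 := by positivity
  have hs' : 3 * s = q ^ 3 * (q - 1) * (q ^ 2 - q + 1) := by
    refine mul_left_cancel₀ h1 (mul_left_cancel₀ two_ne_zero ?_)
    linear_combination hs
  have ht' : t = - (q ^ 2 * (q ^ 2 - q + 1)) := by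
    have h2 : (q + 1) ^ 3 * (q ^ 2 - q) ≠ 0 := mul_ne_zero h1 (by nlinarith)
    refine mul_left_cancel₀ h2 ?_
    linear_combination ht
  symm
  refine Int.ediv_eq_of_eq_mul_right (by norm_num) ?_
  rw [ht']
  linear_combination -hs'

end PSUPaper
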